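/- arXiv:2211.12227 — 2 statements merged into one kernel-verified Lean document; each statement's English description precedes it below -/
import Mathlib

section
/- Let S be a set of Horn clauses, R ∈ S, and R' a clause such that R subsumes R'. Then for every ground term F, F is derivable from S ∪ {R'} if and only if F is derivable from S (elimination of subsumed clauses preserves derivable facts). -/
/-!
A step using the subsumed clause `R' = (H', C')` with substitution `σ` can be replaced by a step
using `R = (H, C)`: if `H·τ ⊆ H'` and `C·τ = C'`, then `R` instantiated with the composite
substitution `n ↦ (τ n)·σ` has conclusion `C'·σ`, and its hypotheses are among those of `H'·σ`.
An induction on the derivation applies this to every step.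
-/

open FirstOrder Language

/-- A Horn clause: a finite set of hypotheses together with a conclusion. -/
abbrev HornClause (L : FirstOrder.Language) : Type _ := Finset (L.Term ℕ) × L.Term ℕ

/-- A term is ground if it contains no variables. -/
def IsGround {L : FirstOrder.Language} (t : L.Term ℕ) : Prop := t.varFinset = ∅

/-- Derivability of a term from a set of Horn clauses: `F` is derivable iff there are a
clause `(H, C) ∈ S` and a substitution `σ` with `C·σ = F` and every `A·σ` (`A ∈ H`)
derivable. -/
inductive Derivable {L : FirstOrder.Language} (S : Set (HornClause L)) : L.Term ℕ → Prop where
  | step (H : Finset (L.Term ℕ)) (C : L.Term ℕ) (σ : ℕ → L.Term ℕ) :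
      (H, C) ∈ S → (∀ A ∈ H, Derivable S (A.subst σ)) → Derivable S (C.subst σ)

/-- `R = (H, C)` subsumes `R' = (H', C')` if there is a substitution `σ` with
`H·σ ⊆ H'` and `C·σ = C'`. -/
def Subsumes {L : FirstOrder.Language} [DecidableEq (L.Term ℕ)]
    (R R' : HornClause L) : Prop :=
  ∃ σ : ℕ → L.Term ℕ, R.1.image (fun A => A.subst σ) ⊆ R'.1 ∧ R.2.subst σ = R'.2

/-- Substitutions compose. -/
theorem term_subst_subst {L : FirstOrder.Language} (t : L.Term ℕ) (τ σ : ℕ → L.Term ℕ) :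
    (t.subst τ).subst σ = t.subst (fun n => (τ n).subst σ) := by
  induction t with
  | var n => rfl
  | func f ts ih => simp only [Term.subst, ih]

theorem Derivable.mono {L : FirstOrder.Language} {S T : Set (HornClause L)} (hST : S ⊆ T)
    {F : L.Term ℕ} (h : Derivable S F) : Derivable T F := by
  induction h with
  | step H C σ hmem _ ih => exact .step H C σ (hST hmem) ih

/-- Elimination of subsumed clauses preserves derivable ground facts: if `R ∈ S`
subsumes `R'`, then `S ∪ {R'}` and `S` derive the same ground facts. -/
theorem subsumed_clause_elimination (L : FirstOrder.Language) [DecidableEq (L.Term ℕ)]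
    (S : Set (HornClause L)) (R R' : HornClause L)
    (hR : R ∈ S) (hsub : Subsumes R R')
    (F : L.Term ℕ) (hF : IsGround F) :
    Derivable (S ∪ {R'}) F ↔ Derivable S F := by
  refine ⟨fun h => ?_, Derivable.mono Set.subset_union_left⟩
  clear hF
  induction h with
  | step H C σ hmem _ ih =>
    rcases hmem with hmem | rfl
    · exact .step H C σ hmem ih
    · obtain ⟨τ, hH, hC⟩ := hsub
      obtain ⟨H₀, C₀⟩ := R
      obtain rfl : C₀.subst τ = C := hC
      rw [term_subst_subst]
      refine .step H₀ C₀ _ hR fun A hA => ?_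
      rw [← term_subst_subst]
      exact ih _ (hH (Finset.mem_image_of_mem _ hA))
end

section
/- Let f be an n-ary function symbol of L and let S be a set of Horn clauses containing the constructor clause ({x₁, …, xₙ}, f(x₁, …, xₙ)) and, for each 1 ≤ i ≤ n, the projection clause ({f(x₁, …, xₙ)}, xᵢ), where x₁, …, xₙ are pairwise distinct variables. Let R = (H, f(t₁, …, tₙ)) be a clause whose conclusion is headed by f. Then for every ground term F, F is derivable from S ∪ {R} if and only if F is derivable from S ∪ {(H, t₁), …, (H, tₙ)} (splitting data-constructor conclusions preserves derivable facts). -/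
/-!
In the presence of the constructor and projection clauses of `f`, a term `f(u₁, …, uₙ)` is
derivable if and only if all the `uᵢ` are (`derivable_func_iff`). Hence each instance of the clause
`(H, f(t₁, …, tₙ))` is an admissible rule for the split system, and each instance of a clause
`(H, tᵢ)` is an admissible rule for the original one; admissible rules add no derivable terms
(`Derivable.of_admissible`).
-/

open FirstOrder Language

/-- If every instance of every clause of `S` preserves derivability from `T`, then everything
derivable from `S` is derivable from `T`. -/
theorem Derivable.of_admissible {L : FirstOrder.Language} {S T : Set (HornClause L)}
    (h : ∀ (H : Finset (L.Term ℕ)) (C : L.Term ℕ) (σ : ℕ → L.Term ℕ), (H, C) ∈ S →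
      (∀ A ∈ H, Derivable T (A.subst σ)) → Derivable T (C.subst σ))
    {F : L.Term ℕ} (hF : Derivable S F) : Derivable T F := by
  induction hF with
  | step H C σ hmem _ ih => exact h H C σ hmem ih

theorem derivable_func_iff {L : FirstOrder.Language}
    [DecidableEq (L.Term ℕ)] {n : ℕ} {f : L.Functions n}
    {T : Set (HornClause L)} {v : Fin n → ℕ} (hv : Function.Injective v)
    (hcons : ((Finset.univ.image fun i : Fin n => (Term.var (v i) : L.Term ℕ)),
        Term.func f (fun i => Term.var (v i))) ∈ T)
    (hproj : ∀ i : Fin n,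
        (({Term.func f (fun j => Term.var (v j))} : Finset (L.Term ℕ)),
          (Term.var (v i) : L.Term ℕ)) ∈ T)
    (u : Fin n → L.Term ℕ) :
    Derivable T (Term.func f u) ↔ ∀ i, Derivable T (u i) := by
  -- Since the variables `v i` are distinct, some substitution sends each `v i` to `u i`.
  obtain ⟨σ, hσ⟩ : ∃ σ : ℕ → L.Term ℕ, ∀ i, σ (v i) = u i :=
    ⟨Function.extend v u Term.var, fun i => hv.extend_apply _ _ i⟩
  have hfunc : (Term.func f (fun i => Term.var (v i)) : L.Term ℕ).subst σ = Term.func f u := by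
    simp [Term.subst, hσ]
  constructor
  · intro h i
    have key := Derivable.step _ _ σ (hproj i) (by
      intro A hA
      rw [Finset.mem_singleton] at hA
      rw [hA, hfunc]
      exact h)
    simpa [Term.subst, hσ] using key
  · intro h
    rw [← hfunc]
    refine Derivable.step _ _ σ hcons ?_
    intro A hA
    obtain ⟨i, -, rfl⟩ := Finset.mem_image.1 hA
    simpa [Term.subst, hσ] using h i

/-- Splitting data-constructor conclusions preserves derivable ground facts:
if `S` contains the constructor and projection clauses for `f`, replacing the clause
`R = (H, f(t₁, …, tₙ))` by the `n` clauses `(H, t₁), …, (H, tₙ)` does not change the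
derivable ground facts. -/
theorem split_data_constructor_concl (L : FirstOrder.Language)
    [DecidableEq (L.Term ℕ)] {n : ℕ} (f : L.Functions n)
    (S : Set (HornClause L)) (v : Fin n → ℕ) (hv : Function.Injective v)
    (hcons : ((Finset.univ.image fun i : Fin n => (Term.var (v i) : L.Term ℕ)),
        Term.func f (fun i => Term.var (v i))) ∈ S)
    (hproj : ∀ i : Fin n,
        (({Term.func f (fun j => Term.var (v j))} : Finset (L.Term ℕ)),
          (Term.var (v i) : L.Term ℕ)) ∈ S)
    (t : Fin n → L.Term ℕ) (H : Finset (L.Term ℕ))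
    (F : L.Term ℕ) (hF : IsGround F) :
    Derivable (S ∪ {(H, Term.func f t)}) F ↔
      Derivable (S ∪ Set.range (fun i : Fin n => ((H, t i) : HornClause L))) F := by
  constructor
  · refine Derivable.of_admissible ?_
    rintro H' C σ (hS | hR) hH
    · exact Derivable.step H' C σ (Or.inl hS) hH
    · obtain ⟨rfl, rfl⟩ := Prod.mk.inj (Set.mem_singleton_iff.1 hR)
      exact (derivable_func_iff hv (Or.inl hcons) (fun i => Or.inl (hproj i)) _).2
        fun i => Derivable.step H' (t i) σ (Or.inr ⟨i, rfl⟩) hH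
  · refine Derivable.of_admissible ?_
    rintro H' C σ (hS | ⟨i, hi⟩) hH
    · exact Derivable.step H' C σ (Or.inl hS) hH
    · obtain ⟨rfl, rfl⟩ := Prod.mk.inj hi
      exact (derivable_func_iff hv (Or.inl hcons) (fun i => Or.inl (hproj i))
        (fun j => (t j).subst σ)).1 (Derivable.step H (Term.func f t) σ (Or.inr rfl) hH) i
end
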